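/- (Strong duality for altitude guarding) For every terrain T with altitude line A at height h, the minimum cardinality of a guard cover equals the maximum cardinality of a witness set: there exists m ∈ ℕ such that m is the least element of {k : ∃ finite guard cover G ⊆ A with Set.ncard G = k} and m is the greatest element of {k : ∃ finite witness set W ⊆ T with Set.ncard W = k}. -/

import Mathlib

open Set

/-- The terrain: union of the closed segments `[v i, v (i+1)]`, `i = 0, …, n-2`. -/
def terrain (n : ℕ) (hn : 2 ≤ n) (v : Fin n → ℝ × ℝ) : Set (ℝ × ℝ) :=
  ⋃ i : Fin (n - 1), segment ℝ (v (Fin.castLE (by omega) i)) (v (Fin.cast (by omega) i.succ))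

/-- A point `r` is on or above the terrain `T`. -/
def onAbove (T : Set (ℝ × ℝ)) (r : ℝ × ℝ) : Prop :=
  ∀ t ∈ T, t.1 = r.1 → t.2 ≤ r.2

/-- `p` sees `q` (w.r.t. terrain `T`): every point of the segment `[p,q]` is on or above `T`. -/
def seesT (T : Set (ℝ × ℝ)) (p q : ℝ × ℝ) : Prop :=
  ∀ x ∈ segment ℝ p q, onAbove T x

/-- The altitude line at height `h`: the segment from `((v 0).1, h)` to `((v (n-1)).1, h)`. -/
def altLine (n : ℕ) (hn : 2 ≤ n) (v : Fin n → ℝ × ℝ) (h : ℝ) : Set (ℝ × ℝ) :=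
  segment ℝ ((v ⟨0, by omega⟩).1, h) ((v ⟨n - 1, by omega⟩).1, h)

/-- Visibility region on the terrain of a point `g` of the altitude line. -/
def visT (n : ℕ) (hn : 2 ≤ n) (v : Fin n → ℝ × ℝ) (g : ℝ × ℝ) : Set (ℝ × ℝ) :=
  {q | q ∈ terrain n hn v ∧ seesT (terrain n hn v) g q}

/-- Visibility region on the altitude line of a point `w` of the terrain. -/
def visA (n : ℕ) (hn : 2 ≤ n) (v : Fin n → ℝ × ℝ) (h : ℝ) (w : ℝ × ℝ) : Set (ℝ × ℝ) :=
  {p | p ∈ altLine n hn v h ∧ seesT (terrain n hn v) w p}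

theorem mem_terrain (n : ℕ) (hn : 2 ≤ n) (v : Fin n → ℝ × ℝ) (p : ℝ × ℝ) :
    p ∈ terrain n hn v ↔ ∃ (i : ℕ) (hi : i + 1 < n) (t : ℝ), 0 ≤ t ∧ t ≤ 1 ∧
      p.1 = (v ⟨i, by omega⟩).1 + t * ((v ⟨i + 1, hi⟩).1 - (v ⟨i, by omega⟩).1) ∧
      p.2 = (v ⟨i, by omega⟩).2 + t * ((v ⟨i + 1, hi⟩).2 - (v ⟨i, by omega⟩).2) := by
  unfold terrain
  simp only [mem_iUnion, segment_eq_image', mem_image, mem_Icc]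
  constructor
  · rintro ⟨⟨i, hi⟩, t, ⟨h0, h1⟩, rfl⟩
    exact ⟨i, by omega, t, h0, h1, rfl, rfl⟩
  · rintro ⟨i, hi, t, h0, h1, e1, e2⟩
    refine ⟨⟨i, by omega⟩, t, ⟨h0, h1⟩, ?_⟩
    ext
    · exact e1.symm
    · exact e2.symm

theorem mem_altLine (n : ℕ) (hn : 2 ≤ n) (v : Fin n → ℝ × ℝ)
    (hmono : ∀ i j : Fin n, i < j → (v i).1 < (v j).1) (h : ℝ) (p : ℝ × ℝ) :
    p ∈ altLine n hn v h ↔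
      p.2 = h ∧ p.1 ∈ Icc (v ⟨0, by omega⟩).1 (v ⟨n - 1, by omega⟩).1 := by
  have hlt : (v ⟨0, by omega⟩).1 < (v ⟨n - 1, by omega⟩).1 :=
    hmono _ _ (by rw [Fin.lt_def]; show 0 < n - 1; omega)
  unfold altLine
  simp only [segment_eq_image', mem_image, mem_Icc]
  set a := (v ⟨0, by omega⟩).1
  set b := (v ⟨n - 1, by omega⟩).1
  constructor
  · rintro ⟨t, ⟨h0, h1⟩, rfl⟩
    simp only [Prod.snd_add, Prod.fst_add, Prod.smul_fst, Prod.smul_snd, Prod.fst_sub,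
      Prod.snd_sub, smul_eq_mul]
    refine ⟨by ring, ?_, ?_⟩ <;> nlinarith
  · rintro ⟨e, h0, h1⟩
    have hba : 0 < b - a := by linarith
    refine ⟨(p.1 - a) / (b - a), ⟨by apply div_nonneg <;> linarith, ?_⟩, ?_⟩
    · rw [div_le_one hba]; linarith
    · ext
      · simp; field_simp; ring
      · simp [e]

theorem terrain_graph (n : ℕ) (hn : 2 ≤ n) (v : Fin n → ℝ × ℝ)
    (hmono : ∀ i j : Fin n, i < j → (v i).1 < (v j).1) (p q : ℝ × ℝ)
    (hp : p ∈ terrain n hn v) (hq : q ∈ terrain n hn v) (hpq : p.1 = q.1) : p.2 = q.2 := by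
  rw [mem_terrain] at hp hq
  obtain ⟨i, hi, t, t0, t1, p1, p2⟩ := hp
  obtain ⟨j, hj, s, s0, s1, q1, q2⟩ := hq
  have key : ∀ (i j : ℕ) (hi : i + 1 < n) (hj : j + 1 < n) (t s : ℝ), 0 ≤ t → t ≤ 1 → 0 ≤ s →
      s ≤ 1 → i < j →
      (v ⟨i, by omega⟩).1 + t * ((v ⟨i + 1, hi⟩).1 - (v ⟨i, by omega⟩).1) =
      (v ⟨j, by omega⟩).1 + s * ((v ⟨j + 1, hj⟩).1 - (v ⟨j, by omega⟩).1) →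
      (v ⟨i, by omega⟩).2 + t * ((v ⟨i + 1, hi⟩).2 - (v ⟨i, by omega⟩).2) =
      (v ⟨j, by omega⟩).2 + s * ((v ⟨j + 1, hj⟩).2 - (v ⟨j, by omega⟩).2) := by
    intro i j hi hj t s t0 t1 s0 s1 hij e
    have a1 := hmono ⟨i, by omega⟩ ⟨i + 1, hi⟩ (by simp [Fin.lt_def])
    have a2 := hmono ⟨j, by omega⟩ ⟨j + 1, hj⟩ (by simp [Fin.lt_def])
    have a4 : i + 1 = j := by
      by_contra hne
      have a3 := hmono ⟨i + 1, by omega⟩ ⟨j, by omega⟩ (by rw [Fin.lt_def]; show i + 1 < j; omega)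
      nlinarith
    subst a4
    have ht : t = 1 := by
      by_contra hne
      have : t < 1 := lt_of_le_of_ne t1 hne
      nlinarith
    have hs : s = 0 := by
      by_contra hne
      have : 0 < s := lt_of_le_of_ne s0 (Ne.symm hne)
      nlinarith
    subst ht hs
    ring
  rw [p1, q1] at hpq
  rw [p2, q2]
  rcases lt_trichotomy i j with hij | hij | hij
  · exact key i j hi hj t s t0 t1 s0 s1 hij hpq
  · subst hij
    have a1 := hmono ⟨i, by omega⟩ ⟨i + 1, hi⟩ (by simp [Fin.lt_def])
    have : t = s := by
      have := add_left_cancel hpq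
      exact mul_right_cancel₀ (by linarith) this
    rw [this]
  · exact (key j i hj hi s t s0 s1 t0 t1 hij hpq.symm).symm

theorem terrain_lt (n : ℕ) (hn : 2 ≤ n) (v : Fin n → ℝ × ℝ) (h : ℝ)
    (hh : ∀ i : Fin n, (v i).2 < h) (p : ℝ × ℝ) (hp : p ∈ terrain n hn v) : p.2 < h := by
  rw [mem_terrain] at hp
  obtain ⟨i, hi, t, t0, t1, p1, p2⟩ := hp
  have h1 := hh ⟨i, by omega⟩
  have h2 := hh ⟨i + 1, hi⟩
  rw [p2]
  rcases eq_or_lt_of_le t0 with rfl | h0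
  · linarith
  · nlinarith

theorem terrain_range (n : ℕ) (hn : 2 ≤ n) (v : Fin n → ℝ × ℝ)
    (hmono : ∀ i j : Fin n, i < j → (v i).1 < (v j).1) (p : ℝ × ℝ)
    (hp : p ∈ terrain n hn v) : p.1 ∈ Icc (v ⟨0, by omega⟩).1 (v ⟨n - 1, by omega⟩).1 := by
  rw [mem_terrain] at hp
  obtain ⟨i, hi, t, t0, t1, p1, p2⟩ := hp
  have hm : StrictMono (fun i => (v i).1) := fun i j => hmono i j
  have a1 : (v ⟨0, by omega⟩).1 ≤ (v ⟨i, by omega⟩).1 :=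
    hm.monotone (by rw [Fin.le_def]; exact Nat.zero_le _)
  have a2 : (v ⟨i + 1, hi⟩).1 ≤ (v ⟨n - 1, by omega⟩).1 :=
    hm.monotone (by rw [Fin.le_def]; show i + 1 ≤ n - 1; omega)
  have a3 := hmono ⟨i, by omega⟩ ⟨i + 1, hi⟩ (by simp [Fin.lt_def])
  rw [p1]
  constructor <;> nlinarith

/-- The explicit half-line description of visibility. -/
def visCond (T : Set (ℝ × ℝ)) (h : ℝ) (w : ℝ × ℝ) (x : ℝ) : Prop :=
  ∀ τ ∈ T, w.2 < τ.2 →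
    (w.1 < τ.1 → (τ.2 - w.2) * (x - w.1) ≤ (τ.1 - w.1) * (h - w.2)) ∧
    (τ.1 < w.1 → (τ.2 - w.2) * (w.1 - x) ≤ (w.1 - τ.1) * (h - w.2))

theorem sees_iff (T : Set (ℝ × ℝ)) (h : ℝ)
    (hg : ∀ p ∈ T, ∀ q ∈ T, p.1 = q.1 → p.2 = q.2) (hb : ∀ p ∈ T, p.2 < h)
    (w : ℝ × ℝ) (hw : w ∈ T) (x : ℝ) : seesT T w (x, h) ↔ visCond T h w x := by
  have hwh := hb w hw
  unfold seesT onAbove visCond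
  simp only [segment_eq_image', mem_image, mem_Icc]
  constructor
  · intro H τ hτ hlt
    have hτh := hb τ hτ
    constructor
    · intro hx
      rcases le_or_gt x τ.1 with hxt | hxt
      · nlinarith
      · have hd : 0 < x - w.1 := by linarith
        have := H _ ⟨(τ.1 - w.1) / (x - w.1), ⟨by apply div_nonneg <;> linarith,
          by rw [div_le_one hd]; linarith⟩, rfl⟩ τ hτ (by simp; field_simp; ring)
        simp at this
        have h2 : τ.2 - w.2 ≤ (τ.1 - w.1) * (h - w.2) / (x - w.1) := by
          rw [mul_div_right_comm]; linarith
        exact (le_div_iff₀ hd).1 h2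
    · intro hx
      rcases le_or_gt τ.1 x with hxt | hxt
      · nlinarith
      · have hd : 0 < w.1 - x := by linarith
        have := H _ ⟨(w.1 - τ.1) / (w.1 - x), ⟨by apply div_nonneg <;> linarith,
          by rw [div_le_one hd]; linarith⟩, rfl⟩ τ hτ (by simp; field_simp; ring)
        simp at this
        have h2 : τ.2 - w.2 ≤ (w.1 - τ.1) * (h - w.2) / (w.1 - x) := by
          rw [mul_div_right_comm]; linarith
        exact (le_div_iff₀ hd).1 h2
  · rintro H _ ⟨t, ⟨t0, t1⟩, rfl⟩ τ hτ e
    simp only [Prod.snd_add, Prod.fst_add, Prod.smul_fst, Prod.smul_snd, Prod.fst_sub,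
      Prod.snd_sub, smul_eq_mul] at e ⊢
    rcases le_or_gt τ.2 w.2 with hle | hlt
    · nlinarith
    obtain ⟨H1, H2⟩ := H τ hτ hlt
    rcases lt_trichotomy w.1 τ.1 with hx | hx | hx
    · have h1 := H1 hx
      have e' : τ.1 - w.1 = t * (x - w.1) := by linarith
      rw [e'] at h1
      have hp : 0 < x - w.1 := by
        by_contra hn
        nlinarith
      have : τ.2 - w.2 ≤ t * (h - w.2) := by
        apply le_of_mul_le_mul_right _ hp
        linarith
      linarith
    · exact absurd (hg w hw τ hτ hx) hlt.ne
    · have h1 := H2 hx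
      have e' : w.1 - τ.1 = t * (w.1 - x) := by linarith
      rw [e'] at h1
      have hp : 0 < w.1 - x := by
        by_contra hn
        nlinarith
      have : τ.2 - w.2 ≤ t * (h - w.2) := by
        apply le_of_mul_le_mul_right _ hp
        linarith
      linarith

theorem visCond_closed (T : Set (ℝ × ℝ)) (h : ℝ) (w : ℝ × ℝ) : IsClosed {x | visCond T h w x} := by
  unfold visCond
  simp only [ofPred_forall, ofPred_and]
  refine isClosed_iInter fun τ => isClosed_iInter fun _ => isClosed_iInter fun _ => IsClosed.inter
    (isClosed_iInter fun _ => ?_) (isClosed_iInter fun _ => ?_)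
  · exact isClosed_le (by fun_prop) (by fun_prop)
  · exact isClosed_le (by fun_prop) (by fun_prop)

theorem visCond_between (T : Set (ℝ × ℝ)) (h : ℝ) (w : ℝ × ℝ) (x y z : ℝ) (hx : visCond T h w x)
    (hz : visCond T h w z) (hxy : x ≤ y) (hyz : y ≤ z) : visCond T h w y := by
  intro τ hτ hlt
  obtain ⟨a1, a2⟩ := hx τ hτ hlt
  obtain ⟨b1, b2⟩ := hz τ hτ hlt
  constructor
  · intro hh
    have := b1 hh
    nlinarith
  · intro hh
    have := a2 hh
    nlinarith

/-- Duality for bounded families of closed intervals. -/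
theorem interval_duality {ι : Type*} (L R : ι → ℝ) (a b : ℝ) (k : ℕ) : ∀ (S : Set ι),
    (∀ w ∈ S, L w ≤ R w) → (∀ w ∈ S, a ≤ R w ∧ R w ≤ b) →
    (∀ W : Finset ι, (W : Set ι) ⊆ S →
      (∀ w ∈ W, ∀ w' ∈ W, w ≠ w' → R w < L w' ∨ R w' < L w) → W.card ≤ k) →
    ∃ G : Finset ℝ, G.card ≤ k ∧ (∀ g ∈ G, a ≤ g ∧ g ≤ b) ∧
      ∀ w ∈ S, ∃ g ∈ G, L w ≤ g ∧ g ≤ R w := by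
  classical
  induction k with
  | zero =>
    intro S _ _ hW
    refine ⟨∅, by simp, by simp, ?_⟩
    intro w hw
    have := hW {w} (by simpa using hw) (by simp)
    simp at this
  | succ k ih =>
    intro S hLR hab hW
    rcases S.eq_empty_or_nonempty with rfl | hne
    · exact ⟨∅, by simp, by simp, by simp⟩
    have hbdd : BddBelow (R '' S) := ⟨a, by rintro _ ⟨w, hw, rfl⟩; exact (hab w hw).1⟩
    set r := sInf (R '' S) with hr
    have hrle : ∀ w ∈ S, r ≤ R w := fun w hw => csInf_le hbdd ⟨w, hw, rfl⟩
    have har : a ≤ r := le_csInf (hne.image R) (by rintro _ ⟨w, hw, rfl⟩; exact (hab w hw).1)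
    have hrb : r ≤ b := by
      obtain ⟨w, hw⟩ := hne
      exact (hrle w hw).trans (hab w hw).2
    obtain ⟨G, hG, hGab, hGS⟩ := ih {w ∈ S | r < L w} (fun w hw => hLR w hw.1)
      (fun w hw => hab w hw.1) (by
        intro W hWS hdis
        have hex : ∃ c, r < c ∧ ∀ w ∈ W, c ≤ L w := by
          rcases W.eq_empty_or_nonempty with rfl | hWne
          · exact ⟨r + 1, by linarith, by simp⟩
          · obtain ⟨w0, hw0, hmin⟩ := W.exists_min_image L hWne
            exact ⟨L w0, (hWS hw0).2, hmin⟩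
        obtain ⟨c, hc, hcL⟩ := hex
        obtain ⟨_, ⟨u, hu, rfl⟩, huc⟩ := exists_lt_of_csInf_lt (hne.image R) hc
        have hun : u ∉ W := by
          intro h
          have := hcL u h
          have := hLR u hu
          linarith
        have := hW (insert u W) (by
          intro w hw
          simp only [Finset.coe_insert, mem_insert_iff] at hw
          rcases hw with rfl | hw
          · exact hu
          · exact (hWS hw).1) (by
          intro w hw w' hw' hneq
          rw [Finset.mem_insert] at hw hw'
          rcases hw with rfl | hw <;> rcases hw' with rfl | hw'
          · exact absurd rfl hneq
          · exact Or.inl (lt_of_lt_of_le huc (hcL _ hw'))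
          · exact Or.inr (lt_of_lt_of_le huc (hcL _ hw))
          · exact hdis w hw w' hw' hneq)
        rw [Finset.card_insert_of_notMem hun] at this
        omega)
    refine ⟨insert r G, (Finset.card_insert_le _ _).trans (by omega), ?_, ?_⟩
    · intro g hg
      rcases Finset.mem_insert.1 hg with rfl | hg
      · exact ⟨har, hrb⟩
      · exact hGab g hg
    · intro w hw
      rcases le_or_gt (L w) r with hl | hl
      · exact ⟨r, Finset.mem_insert_self _ _, hl, hrle w hw⟩
      · obtain ⟨g, hg, h1⟩ := hGS w ⟨hw, hl⟩
        exact ⟨g, Finset.mem_insert_of_mem hg, h1⟩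

/-- Every point of edge `i` is seen by the point of the altitude line above `v i`. -/
theorem edge_vis (n : ℕ) (hn : 2 ≤ n) (v : Fin n → ℝ × ℝ)
    (hmono : ∀ i j : Fin n, i < j → (v i).1 < (v j).1)
    (h : ℝ) (hh : ∀ i : Fin n, (v i).2 < h) (w : ℝ × ℝ) (i : ℕ) (hi : i + 1 < n) (t : ℝ)
    (t0 : 0 ≤ t) (t1 : t ≤ 1)
    (w1 : w.1 = (v ⟨i, by omega⟩).1 + t * ((v ⟨i + 1, hi⟩).1 - (v ⟨i, by omega⟩).1))
    (w2 : w.2 = (v ⟨i, by omega⟩).2 + t * ((v ⟨i + 1, hi⟩).2 - (v ⟨i, by omega⟩).2)) :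
    visCond (terrain n hn v) h w (v ⟨i, by omega⟩).1 := by
  intro τ hτ hlt
  have hτh := terrain_lt n hn v h hh τ hτ
  have a3 := hmono ⟨i, by omega⟩ ⟨i + 1, hi⟩ (by simp [Fin.lt_def])
  have hv := hh ⟨i, by omega⟩
  set p := v ⟨i, by omega⟩ with hp
  set q := v ⟨i + 1, hi⟩ with hq
  have hpw : p.1 ≤ w.1 := by nlinarith
  have hwq : w.1 ≤ q.1 := by nlinarith
  constructor
  · intro hx
    have : (τ.2 - w.2) * (p.1 - w.1) ≤ 0 := by
      apply mul_nonpos_of_nonneg_of_nonpos <;> linarith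
    have : 0 ≤ (τ.1 - w.1) * (h - w.2) := by apply mul_nonneg <;> linarith
    linarith
  · intro hx
    rcases le_or_gt τ.1 p.1 with hle | hgt
    · rw [mul_comm]; apply mul_le_mul <;> linarith
    · have hd : 0 < q.1 - p.1 := by linarith
      set s := (τ.1 - p.1) / (q.1 - p.1) with hs
      have hs0 : 0 ≤ s := by apply div_nonneg <;> linarith
      have hs1 : s ≤ 1 := by rw [hs, div_le_one hd]; linarith
      have es : s * (q.1 - p.1) = τ.1 - p.1 := by rw [hs]; field_simp
      have e2 : τ.2 = p.2 + s * (q.2 - p.2) := by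
        refine terrain_graph n hn v hmono τ (p.1 + s * (q.1 - p.1), p.2 + s * (q.2 - p.2)) hτ ?_ ?_
        · rw [mem_terrain]
          exact ⟨i, hi, s, hs0, hs1, rfl, rfl⟩
        · show τ.1 = p.1 + s * (q.1 - p.1)
          linarith
      have e1 : τ.1 = p.1 + s * (q.1 - p.1) := by linarith
      have e3 : (τ.2 - w.2) * (w.1 - p.1) = (w.1 - τ.1) * (p.2 - w.2) := by
        rw [e2, e1, w1, w2]; ring
      rw [e3]
      apply mul_le_mul_of_nonneg_left <;> linarith

theorem stmt_12 (n : ℕ) (hn : 2 ≤ n) (v : Fin n → ℝ × ℝ)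
    (hmono : ∀ i j : Fin n, i < j → (v i).1 < (v j).1)
    (h : ℝ) (hh : ∀ i : Fin n, (v i).2 < h) :
    ∃ m : ℕ,
      IsLeast {k : ℕ | ∃ G : Set (ℝ × ℝ), G.Finite ∧ G ⊆ altLine n hn v h ∧
        terrain n hn v ⊆ (⋃ g ∈ G, visT n hn v g) ∧ G.ncard = k} m ∧
      IsGreatest {k : ℕ | ∃ W : Set (ℝ × ℝ), W.Finite ∧ W ⊆ terrain n hn v ∧
        (∀ w ∈ W, ∀ w' ∈ W, w ≠ w' → visA n hn v h w ∩ visA n hn v h w' = ∅) ∧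
        W.ncard = k} m := by
  classical
  set T := terrain n hn v with hT
  have hg := terrain_graph n hn v hmono
  have hb := terrain_lt n hn v h hh
  have hrg := terrain_range n hn v hmono
  have hA := mem_altLine n hn v hmono h
  set a := (v ⟨0, by omega⟩).1 with ha
  set b := (v ⟨n - 1, by omega⟩).1 with hb'
  have hsee : ∀ w ∈ T, ∀ x, seesT T w (x, h) ↔ visCond T h w x :=
    fun w hw x => sees_iff T h (fun p hp q hq => hg p q hp hq) hb w hw x
  have hsymm : ∀ p q, seesT T p q → seesT T q p := by
    intro p q H x hx
    exact H x (by rwa [segment_symm])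
  -- the interval of w
  let I : ℝ × ℝ → Set ℝ := fun w => {x | visCond T h w x} ∩ Icc a b
  have hIvis : ∀ w ∈ T, ∀ p : ℝ × ℝ, p ∈ visA n hn v h w ↔ p.2 = h ∧ p.1 ∈ I w := by
    intro w hw p
    constructor
    · rintro ⟨h1, h2⟩
      obtain ⟨e, h3⟩ := (hA p).1 h1
      refine ⟨e, ?_, h3⟩
      apply (hsee w hw p.1).1
      rw [← e]
      exact h2
    · rintro ⟨e, h2, h3⟩
      refine ⟨(hA p).2 ⟨e, h3⟩, ?_⟩
      have := (hsee w hw p.1).2 h2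
      rw [← e] at this
      exact this
  have hInon : ∀ w ∈ T, w.1 ∈ I w := by
    intro w hw
    refine ⟨?_, hrg w hw⟩
    intro τ hτ hlt
    have := hb w hw
    constructor
    · intro h1
      rw [sub_self, mul_zero]
      apply mul_nonneg <;> linarith
    · intro h1
      rw [sub_self, mul_zero]
      apply mul_nonneg <;> linarith
  have hIcl : ∀ w, IsClosed (I w) := fun w => (visCond_closed T h w).inter isClosed_Icc
  have hIa : ∀ w, BddAbove (I w) := fun w => ⟨b, fun x hx => hx.2.2⟩
  have hIb : ∀ w, BddBelow (I w) := fun w => ⟨a, fun x hx => hx.2.1⟩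
  let L : ℝ × ℝ → ℝ := fun w => sInf (I w)
  let R : ℝ × ℝ → ℝ := fun w => sSup (I w)
  have hLm : ∀ w ∈ T, L w ∈ I w := fun w hw => (hIcl w).csInf_mem ⟨_, hInon w hw⟩ (hIb w)
  have hRm : ∀ w ∈ T, R w ∈ I w := fun w hw => (hIcl w).csSup_mem ⟨_, hInon w hw⟩ (hIa w)
  have hLR : ∀ w ∈ T, L w ≤ R w := fun w hw => csInf_le (hIb w) (hRm w hw)
  have hIeq : ∀ w ∈ T, ∀ x, x ∈ I w ↔ L w ≤ x ∧ x ≤ R w := by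
    intro w hw x
    constructor
    · intro hx
      exact ⟨csInf_le (hIb w) hx, le_csSup (hIa w) hx⟩
    · rintro ⟨h1, h2⟩
      exact ⟨visCond_between T h w _ x _ (hLm w hw).1 (hRm w hw).1 h1 h2,
        (hLm w hw).2.1.trans h1, h2.trans (hRm w hw).2.2⟩
  -- weak duality
  have hweak : ∀ G : Set (ℝ × ℝ), G.Finite → G ⊆ altLine n hn v h →
      T ⊆ (⋃ g ∈ G, visT n hn v g) → ∀ W : Set (ℝ × ℝ), W ⊆ T →
      (∀ w ∈ W, ∀ w' ∈ W, w ≠ w' → visA n hn v h w ∩ visA n hn v h w' = ∅) →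
      W.ncard ≤ G.ncard := by
    intro G hGf hGA hGc W hWT hWd
    have hch : ∀ w, ∃ g, w ∈ W → g ∈ G ∧ seesT T g w := by
      intro w
      by_cases hw : w ∈ W
      · have := hGc (hWT hw)
        simp only [mem_iUnion] at this
        obtain ⟨g, hg, h1⟩ := this
        exact ⟨g, fun _ => ⟨hg, h1.2⟩⟩
      · exact ⟨0, fun h => absurd h hw⟩
    choose f hf using hch
    refine ncard_le_ncard_of_injOn f (fun w hw => (hf w hw).1) ?_ hGf
    intro w hw w' hw' e
    by_contra hne
    have hd := hWd w hw w' hw' hne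
    have : f w ∈ visA n hn v h w ∩ visA n hn v h w' := by
      refine ⟨⟨hGA (hf w hw).1, hsymm _ _ (hf w hw).2⟩, ?_⟩
      rw [e]
      exact ⟨hGA (hf w' hw').1, hsymm _ _ (hf w' hw').2⟩
    rw [hd] at this
    exact this
  -- boundedness of witness sets
  have hbound : ∀ W : Set (ℝ × ℝ), W ⊆ T →
      (∀ w ∈ W, ∀ w' ∈ W, w ≠ w' → visA n hn v h w ∩ visA n hn v h w' = ∅) →
      W.ncard ≤ n := by
    intro W hWT hWd
    have hch : ∀ w, ∃ j : Fin n, w ∈ W → ((v j).1, h) ∈ visA n hn v h w := by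
      intro w
      by_cases hw : w ∈ W
      · obtain ⟨i, hi, t, t0, t1, w1, w2⟩ := (mem_terrain n hn v w).1 (hWT hw)
        refine ⟨⟨i, by omega⟩, fun _ => (hIvis w (hWT hw) _).2 ⟨rfl, ?_, ?_⟩⟩
        · exact edge_vis n hn v hmono h hh w i hi t t0 t1 w1 w2
        · apply hrg (v ⟨i, by omega⟩)
          rw [mem_terrain]
          exact ⟨i, hi, 0, le_refl _, zero_le_one, by ring, by ring⟩
      · exact ⟨⟨0, by omega⟩, fun h => absurd h hw⟩
    choose f hf using hch
    have := ncard_le_ncard_of_injOn (s := W) (t := (univ : Set (Fin n))) f (fun w hw => mem_univ _)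
      (by
        intro w hw w' hw' e
        by_contra hne
        have hd := hWd w hw w' hw' hne
        have hm := hf w' hw'
        rw [← e] at hm
        have : ((v (f w)).1, h) ∈ visA n hn v h w ∩ visA n hn v h w' := ⟨hf w hw, hm⟩
        rw [hd] at this
        exact this) finite_univ
    simpa [ncard_univ] using this
  set K := {k : ℕ | ∃ W : Set (ℝ × ℝ), W.Finite ∧ W ⊆ T ∧
        (∀ w ∈ W, ∀ w' ∈ W, w ≠ w' → visA n hn v h w ∩ visA n hn v h w' = ∅) ∧
        W.ncard = k} with hK
  have hKne : K.Nonempty := ⟨0, ∅, finite_empty, empty_subset _, by simp, by simp⟩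
  have hKb : BddAbove K := by
    refine ⟨n, ?_⟩
    rintro k ⟨W, _, hWT, hWd, rfl⟩
    exact hbound W hWT hWd
  have hgr : IsGreatest K (sSup K) := ⟨Nat.sSup_mem hKne hKb, fun k hk => le_csSup hKb hk⟩
  refine ⟨sSup K, ?_, hgr⟩
  obtain ⟨⟨W0, hW0f, hW0T, hW0d, hW0c⟩, hmax⟩ := hgr
  obtain ⟨G, hGc, hGab, hGS⟩ := interval_duality L R a b (sSup K) T hLR
    (fun w hw => (hRm w hw).2) (by
      intro W hWT hWd
      apply hmax
      refine ⟨W, W.finite_toSet, hWT, ?_, ncard_coe_finset W⟩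
      intro w hw w' hw' hne
      rw [eq_empty_iff_forall_notMem]
      rintro p ⟨h1, h2⟩
      obtain ⟨h3, h4⟩ := (hIeq w (hWT hw) _).1 ((hIvis w (hWT hw) p).1 h1).2
      obtain ⟨h5, h6⟩ := (hIeq w' (hWT hw') _).1 ((hIvis w' (hWT hw') p).1 h2).2
      rcases hWd w hw w' hw' hne with h7 | h7 <;> linarith)
  set G' : Set (ℝ × ℝ) := ((G.image (fun x => (x, h)) : Finset (ℝ × ℝ)) : Set (ℝ × ℝ)) with hG'
  have hG'f : G'.Finite := Finset.finite_toSet _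
  have hG'A : G' ⊆ altLine n hn v h := by
    intro p hp
    simp only [hG', Finset.coe_image, mem_image, Finset.mem_coe] at hp
    obtain ⟨x, hx, rfl⟩ := hp
    exact (hA _).2 ⟨rfl, hGab x hx⟩
  have hG'c : T ⊆ (⋃ g ∈ G', visT n hn v g) := by
    intro w hw
    obtain ⟨g, hg, h1⟩ := hGS w hw
    simp only [mem_iUnion]
    refine ⟨(g, h), ?_, hw, hsymm _ _ ?_⟩
    · simp only [hG', Finset.coe_image, mem_image, Finset.mem_coe]
      exact ⟨g, hg, rfl⟩
    · exact (hsee w hw g).2 ((hIeq w hw g).2 h1).1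
  refine ⟨⟨G', hG'f, hG'A, hG'c, le_antisymm ?_ ?_⟩, ?_⟩
  · rw [hG', ncard_coe_finset]
    exact Finset.card_image_le.trans hGc
  · rw [← hW0c]
    exact hweak G' hG'f hG'A hG'c W0 hW0T hW0d
  · rintro k ⟨G1, h1, h2, h3, rfl⟩
    rw [← hW0c]
    exact hweak G1 h1 h2 h3 W0 hW0T hW0d
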